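/- For every f ∈ C(E) and every x ∈ E∖E₀, the time average (1/T)∫₀^T f(X_t) dt converges to π(f) in P_x-probability as T → ∞; moreover, the convergence is uniform with respect to x in any compact subset of E∖E₀. -/

import Mathlib

open MeasureTheory ProbabilityTheory Filter Topology Set ENNReal

noncomputable section

/-- The data of transition rates `c(x,dy) = r(x) p(x,y) λ(dy)` on a state space `E`,
satisfying Assumption 1.1 (i)-(iii): `r` is continuous and nonnegative, `λ` is a probability
measure which is strictly positive on open sets, `p` is a strictly positive continuous
transition density, and `1/r` is `λ`-integrable. -/
structure ChainSetting (E : Type*) [MeasurableSpace E] [TopologicalSpace E] where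
  r : E → ℝ
  r_cont : Continuous r
  r_nonneg : ∀ x, 0 ≤ r x
  lam : Measure E
  lam_prob : IsProbabilityMeasure lam
  lam_pos : ∀ U : Set E, IsOpen U → U.Nonempty → 0 < lam U
  p : E → E → ℝ
  p_cont : Continuous fun z : E × E => p z.1 z.2
  p_pos : ∀ x y, 0 < p x y
  p_int : ∀ x, ∫ y, p x y ∂lam = 1
  inv_r_int : ∫⁻ x, (ENNReal.ofReal (r x))⁻¹ ∂lam ≠ ∞

namespace ChainSetting

variable {E : Type*} [MeasurableSpace E] [TopologicalSpace E] (S : ChainSetting E)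

/-- The (closed) set `E₀ = {x : r(x) = 0}` of absorbing states. -/
def E0 : Set E := {x | S.r x = 0}

/-- The skeleton transition probability `p(x,dy) = p(x,y) λ(dy)`. -/
def skel (x : E) : Measure E := S.lam.withDensity fun y => ENNReal.ofReal (S.p x y)

/-- The jump rates `c(x,dy) = r(x) p(x,y) λ(dy)`. -/
def cMeas (x : E) : Measure E := S.lam.withDensity fun y => ENNReal.ofReal (S.r x * S.p x y)

/-- The measure `μ(dx) c(x,dy)` on `E × E`. -/
def muc (μ : Measure E) : Measure (E × E) :=
  (μ.prod S.lam).withDensity fun z => ENNReal.ofReal (S.r z.1 * S.p z.1 z.2)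

/-- The invariant probability `π(dx) = π₀(1/r)⁻¹ π₀(dx)/r(x)` of the continuous-time chain,
built from the invariant probability `π₀` of the skeleton, cf. (1.2). -/
def piMeas (π₀ : Measure E) : Measure E :=
  (∫⁻ x, (ENNReal.ofReal (S.r x))⁻¹ ∂π₀)⁻¹ •
    π₀.withDensity fun x => (ENNReal.ofReal (S.r x))⁻¹

/-- Assumption 1.1 (iv): with `A_δ = {r < δ}`, there is a sequence `δ_n → 0` with
`λ(A_{2δ_n}) ≤ C λ(A_{2δ_n} \ A_{δ_n})`. -/
def CondIV : Prop :=
  ∃ δ : ℕ → ℝ, (∀ n, 0 < δ n) ∧ Tendsto δ atTop (𝓝 0) ∧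
    ∃ C : ℝ≥0∞, C ≠ ∞ ∧ ∀ n,
      S.lam {x | S.r x < 2 * δ n} ≤ C * S.lam ({x | S.r x < 2 * δ n} \ {x | S.r x < δ n})

end ChainSetting

/-- Trajectories of the jump process: the skeleton chain `ω.1` together with the holding
times `ω.2` (with value `∞` allowed, corresponding to absorption). -/
abbrev Traj (E : Type*) := (ℕ → E) × (ℕ → ℝ≥0∞)

namespace Traj

variable {E : Type*}

/-- The jump times `T_n = τ_0 + ⋯ + τ_{n-1}`. -/
def jumpTime (n : ℕ) (ω : Traj E) : ℝ≥0∞ := ∑ i ∈ Finset.range n, ω.2 i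

/-- The position at time `t`: `X_t = Z_n` for `T_n ≤ t < T_{n+1}`. -/
def pos (t : ℝ) (ω : Traj E) : E := ω.1 (sInf {n | ENNReal.ofReal t < jumpTime (n + 1) ω})

end Traj

/-- The exponential law of parameter `ρ`, as a measure on `ℝ≥0∞`; for `ρ ≤ 0` it is the Dirac
mass at `∞` (infinite holding time at an absorbing state). -/
def expMeasE (ρ : ℝ) : Measure ℝ≥0∞ :=
  if 0 < ρ then
    Measure.map ENNReal.ofReal
      (MeasureTheory.volume.withDensity fun s =>
        Set.indicator (Set.Ioi (0 : ℝ)) (fun s => ENNReal.ofReal (ρ * Real.exp (-(ρ * s)))) s)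
  else Measure.dirac ∞

/-- `P` is the law of the continuous-time Markov chain with holding rates `ρ` and skeleton
transition kernel `κ`, started at `x`: the skeleton `ω.1` is a Markov chain with kernel `κ`
started at `x`, and conditionally on the skeleton the holding times `ω.2 i` are independent
exponential random variables of parameters `ρ(Z_i)`. -/
structure IsChainLaw {E : Type*} [MeasurableSpace E]
    (ρ : E → ℝ) (κ : E → Measure E) (x : E) (P : Measure (Traj E)) : Prop where
  prob : IsProbabilityMeasure P
  init : P.map (fun ω => ω.1 0) = Measure.dirac x
  markov : ∀ (n : ℕ) (f : (Fin (n + 1) → E) → ℝ≥0∞) (g : E → ℝ≥0∞),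
    Measurable f → Measurable g →
    ∫⁻ ω, f (fun i => ω.1 i) * g (ω.1 (n + 1)) ∂P
      = ∫⁻ ω, f (fun i => ω.1 i) * ∫⁻ y, g y ∂κ (ω.1 n) ∂P
  holding : ∀ (n : ℕ) (f : (ℕ → E) → ℝ≥0∞) (g : Fin n → ℝ≥0∞ → ℝ≥0∞),
    Measurable f → (∀ i, Measurable (g i)) →
    ∫⁻ ω, f ω.1 * ∏ i : Fin n, g i (ω.2 i) ∂P
      = ∫⁻ ω, f ω.1 * ∏ i : Fin n, ∫⁻ s, g i s ∂expMeasE (ρ (ω.1 i)) ∂P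

/-- The empirical measure `μ_T` of (2.2), as a measure on `E`. -/
def empMeas {E : Type*} [MeasurableSpace E] (T : ℝ) (ω : Traj E) : Measure E :=
  (ENNReal.ofReal T)⁻¹ •
    Measure.map (fun t => Traj.pos t ω) (MeasureTheory.volume.restrict (Set.Ioc 0 T))

open Classical in
/-- The empirical flow `Q_T`, as a measure on `E × E`: `(1/T)` times the sum of the Dirac
masses at the jumps `(X_{t⁻}, X_t)` occurring at times `t ∈ [0,T]`. -/
def empFlow {E : Type*} [MeasurableSpace E] (T : ℝ) (ω : Traj E) : Measure (E × E) :=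
  (ENNReal.ofReal T)⁻¹ • Measure.sum fun n : ℕ =>
    if Traj.jumpTime (n + 1) ω ≤ ENNReal.ofReal T ∧ ω.1 n ≠ ω.1 (n + 1)
    then Measure.dirac (ω.1 n, ω.1 (n + 1)) else 0

open Classical in
/-- Bundle a measure as a probability measure (junk value if it is not one). -/
def toPM {α : Type*} [MeasurableSpace α] [Nonempty α] (μ : Measure α) : ProbabilityMeasure α :=
  if h : IsProbabilityMeasure μ then ⟨μ, h⟩
  else ⟨Measure.dirac (Classical.arbitrary α), by infer_instance⟩

open Classical in
/-- Bundle a measure as a finite measure (junk value if it is not one). -/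
def toFM {α : Type*} [MeasurableSpace α] (μ : Measure α) : FiniteMeasure α :=
  if h : IsFiniteMeasure μ then ⟨μ, h⟩ else 0

/-- The pair empirical measure–empirical flow `(μ_T, Q_T)`, as a random element of
`M₁(E) × M₊(E×E)`. -/
def empPair {E : Type*} [MeasurableSpace E] [Nonempty E] (T : ℝ) (ω : Traj E) :
    ProbabilityMeasure E × FiniteMeasure (E × E) :=
  (toPM (empMeas T ω), toFM (empFlow T ω))

variable {E : Type*} [MeasurableSpace E] [TopologicalSpace E] [PolishSpace E]
  [CompactSpace E] [BorelSpace E] [Nonempty E]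

/-!
The pairs (skeleton state, holding time) form a Markov chain whose transition kernel is
minorized by a fixed nonzero measure and dominated by a fixed finite one, because `p` is bounded
away from `0` and `∞`. The minorization contracts oscillations geometrically, so correlations of
bounded functions decay at a geometric rate that does not depend on the starting point, and
Chebyshev's inequality gives the weak law for bounded functions. Domination makes the `L¹` norms
of averages uniformly small, which extends the law to integrable functions; `λ(1/r) < ∞` says
exactly that the holding times are integrable, and `r` bounded below on `K` controls the first
one. Applied to the reward `f(Z_k) τ_k` and to the time `τ_k`, with `a = π₀(1/r)` the mean
holding time, the law says that the first `⌊T / a⌋` jumps take time about `T` and collect about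
`T π(f)`. Replacing `∫₀ᵀ f(X_t) dt` by the collected reward costs at most `‖f‖` times the
discrepancy in time.
-/

section TendstoInProbUniformly

variable {ι γ Ω : Type*} [MeasurableSpace Ω] {P : ι → Measure Ω} {X Y Z : γ → Ω → ℝ}
  {l : Filter γ} {a b c : ℝ}

/-- `X t → a` in `P i`-probability along `l`, uniformly over the family of laws `P i`. -/
def TendstoInProbUniformly (P : ι → Measure Ω) (X : γ → Ω → ℝ) (l : Filter γ) (a : ℝ) : Prop :=
  ∀ ε > 0, Tendsto (fun t => ⨆ i, P i {ω | ε < |X t ω - a|}) l (𝓝 0)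

theorem tendstoInProbUniformly_iff : TendstoInProbUniformly P X l a ↔
    ∀ ε > 0, ∀ η > 0, ∀ᶠ t in l, ∀ i, P i {ω | ε < |X t ω - a|} ≤ η := by
  simp only [TendstoInProbUniformly, ENNReal.tendsto_nhds_zero, iSup_le_iff]

namespace TendstoInProbUniformly

theorem comp {γ' : Type*} {l' : Filter γ'} {φ : γ' → γ} (hX : TendstoInProbUniformly P X l a)
    (hφ : Tendsto φ l' l) : TendstoInProbUniformly P (fun t => X (φ t)) l' a :=
  fun ε hε => (hX ε hε).comp hφ

theorem of_abs_sub_le (hY : TendstoInProbUniformly P Y l a) (hZ : TendstoInProbUniformly P Z l c)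
    (B : ℝ) (hXY : ∀ᶠ t in l, ∀ i, ∀ᵐ ω ∂P i, |X t ω - Y t ω| ≤ B * |Z t ω - c|) :
    TendstoInProbUniformly P X l a := by
  rw [tendstoInProbUniformly_iff] at hY hZ ⊢
  intro ε hε η hη
  have hB : 0 < |B| + 1 := by positivity
  filter_upwards [hXY, hY (ε / 2) (half_pos hε) (η / 2) (ENNReal.half_pos hη.ne'),
    hZ (ε / 2 / (|B| + 1)) (by positivity) (η / 2) (ENNReal.half_pos hη.ne')] with t hXYt hYt hZt i
  have hsub : {ω | ε < |X t ω - a|} ≤ᵐ[P i]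
      ({ω | ε / 2 < |Y t ω - a|} ∪ {ω | ε / 2 / (|B| + 1) < |Z t ω - c|} : Set Ω) := by
    filter_upwards [hXYt i] with ω hω hε'
    refine or_iff_not_imp_left.2 fun hYω => ?_
    replace hYω : |Y t ω - a| ≤ ε / 2 := not_lt.1 hYω
    replace hε' : ε < |X t ω - a| := hε'
    have htri : |X t ω - a| ≤ |X t ω - Y t ω| + |Y t ω - a| := abs_sub_le _ _ _
    have hBZ : B * |Z t ω - c| ≤ (|B| + 1) * |Z t ω - c| := by
      gcongr
      linarith [le_abs_self B]
    exact (div_lt_iff₀' hB).2 (by linarith)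
  calc P i {ω | ε < |X t ω - a|}
      ≤ P i {ω | ε / 2 < |Y t ω - a|} + P i {ω | ε / 2 / (|B| + 1) < |Z t ω - c|} :=
        (measure_mono_ae hsub).trans (measure_union_le _ _)
    _ ≤ η / 2 + η / 2 := add_le_add (hYt i) (hZt i)
    _ = η := ENNReal.add_halves η

theorem mul_of_tendsto {u : γ → ℝ} {v : ℝ} (hX : TendstoInProbUniformly P X l a)
    (hu : Tendsto u l (𝓝 v)) : TendstoInProbUniformly P (fun t ω => u t * X t ω) l (v * a) := by
  rw [tendstoInProbUniformly_iff] at hX ⊢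
  intro ε hε η hη
  have hv : 0 < |v| + 1 := by positivity
  have hua : ∀ᶠ t in l, |u t * a - v * a| < ε / 2 :=
    Metric.tendsto_nhds.1 (hu.mul_const a) _ (half_pos hε)
  have hu_le : ∀ᶠ t in l, |u t| < |v| + 1 := hu.abs.eventually_lt_const (lt_add_one _)
  filter_upwards [hX (ε / 2 / (|v| + 1)) (by positivity) η hη, hua, hu_le] with t hXt hat hvt i
  refine (measure_mono fun ω (hω : ε < _) => ?_).trans (hXt i)
  have htri : |u t * X t ω - v * a| ≤ |u t| * |X t ω - a| + |u t * a - v * a| := by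
    rw [← abs_mul, mul_sub]
    exact abs_sub_le _ _ _
  have huX : |u t| * |X t ω - a| ≤ (|v| + 1) * |X t ω - a| := by gcongr
  exact (div_lt_iff₀' hv).2 (by linarith)

theorem of_forall_exists_lintegral_sub_le
    (h : ∀ δ > 0, ∃ Y b, TendstoInProbUniformly P Y l b ∧ |b - a| ≤ δ ∧ ∀ᶠ t in l, ∀ i,
      AEMeasurable (fun ω => X t ω - Y t ω) (P i) ∧
        ∫⁻ ω, ‖X t ω - Y t ω‖ₑ ∂P i ≤ ENNReal.ofReal δ) :
    TendstoInProbUniformly P X l a := by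
  rw [tendstoInProbUniformly_iff]
  intro ε hε η hη
  obtain ⟨r, hr, hrη⟩ : ∃ r : ℝ, 0 < r ∧ ENNReal.ofReal r ≤ η / 2 := by
    obtain ⟨r, hr, hrη⟩ := ENNReal.lt_iff_exists_nnreal_btwn.1 (ENNReal.half_pos hη.ne')
    exact ⟨r, by exact_mod_cast hr, by simpa using hrη.le⟩
  obtain ⟨Y, b, hY, hba, hXY⟩ := h (min (ε / 3) (r * (ε / 3))) (by positivity)
  filter_upwards [hXY, tendstoInProbUniformly_iff.1 hY (ε / 3) (by positivity) (η / 2)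
    (ENNReal.half_pos hη.ne')] with t hXYt hYt i
  have hsub : {ω | ε < |X t ω - a|} ⊆
      {ω | ε / 3 < |Y t ω - b|} ∪ {ω | ENNReal.ofReal (ε / 3) ≤ ‖X t ω - Y t ω‖ₑ} := by
    refine fun ω (hω : ε < _) => or_iff_not_imp_left.2 fun hYω => ?_
    replace hYω : |Y t ω - b| ≤ ε / 3 := not_lt.1 hYω
    have hXa : |X t ω - a| ≤ |X t ω - Y t ω| + (|Y t ω - b| + |b - a|) :=
      (abs_sub_le _ _ _).trans (add_le_add_right (abs_sub_le _ _ _) _)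
    have hb : |b - a| ≤ ε / 3 := hba.trans (min_le_left _ _)
    rw [mem_ofPred_eq, Real.enorm_eq_ofReal_abs]
    exact ENNReal.ofReal_le_ofReal (by linarith)
  have hmarkov : P i {ω | ENNReal.ofReal (ε / 3) ≤ ‖X t ω - Y t ω‖ₑ} ≤ ENNReal.ofReal r :=
    calc _ ≤ (∫⁻ ω, ‖X t ω - Y t ω‖ₑ ∂P i) / ENNReal.ofReal (ε / 3) :=
          meas_ge_le_lintegral_div (hXYt i).1.enorm (by simpa using hε) ofReal_ne_top
      _ ≤ ENNReal.ofReal (r * (ε / 3)) / ENNReal.ofReal (ε / 3) := by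
          gcongr
          exact (hXYt i).2.trans (ENNReal.ofReal_le_ofReal (min_le_right _ _))
      _ = ENNReal.ofReal r := by
          rw [← ENNReal.ofReal_div_of_pos (by positivity), mul_div_cancel_right₀ _ (by positivity)]
  calc P i {ω | ε < |X t ω - a|}
      ≤ P i {ω | ε / 3 < |Y t ω - b|} + P i {ω | ENNReal.ofReal (ε / 3) ≤ ‖X t ω - Y t ω‖ₑ} :=
        (measure_mono hsub).trans (measure_union_le _ _)
    _ ≤ η / 2 + η / 2 := add_le_add (hYt i) (hmarkov.trans hrη)
    _ = η := ENNReal.add_halves η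

end TendstoInProbUniformly

end TendstoInProbUniformly

section SecondMoment

variable {Ω : Type*} [MeasurableSpace Ω] {μ : Measure Ω} {Y : ℕ → Ω → ℝ} {D ρ : ℝ}

theorem sum_integral_mul_le_of_abs_integral_mul_le (hρ₀ : 0 ≤ ρ) (hρ₁ : ρ < 1)
    (hcov : ∀ i k, |∫ ω, Y i ω * Y (i + k) ω ∂μ| ≤ D * ρ ^ k) (n : ℕ) :
    ∑ i ∈ Finset.range (n + 1), ∫ ω, Y i ω * Y n ω ∂μ ≤ D / (1 - ρ) := by
  have hD : 0 ≤ D := by simpa using (abs_nonneg _).trans (hcov 0 0)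
  calc ∑ i ∈ Finset.range (n + 1), ∫ ω, Y i ω * Y n ω ∂μ
      ≤ ∑ i ∈ Finset.range (n + 1), D * ρ ^ (n - i) := by
        refine Finset.sum_le_sum fun i hi => (le_abs_self _).trans ?_
        simpa [Nat.add_sub_cancel' (Finset.mem_range_succ_iff.1 hi)] using hcov i (n - i)
    _ = D * ∑ k ∈ Finset.Ico 0 (n + 1), ρ ^ k := by
        rw [← Finset.mul_sum, ← Finset.range_eq_Ico, ← Finset.sum_range_reflect (fun k => ρ ^ k)]
        simp
    _ ≤ D * (ρ ^ 0 / (1 - ρ)) := by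
        gcongr
        exact geom_sum_Ico_le_of_lt_one hρ₀ hρ₁
    _ = D / (1 - ρ) := by ring

theorem integral_sum_range_sq_le (hY : ∀ i, MemLp (Y i) 2 μ) (hρ₀ : 0 ≤ ρ) (hρ₁ : ρ < 1)
    (hcov : ∀ i k, |∫ ω, Y i ω * Y (i + k) ω ∂μ| ≤ D * ρ ^ k) (n : ℕ) :
    ∫ ω, (∑ i ∈ Finset.range n, Y i ω) ^ 2 ∂μ ≤ n * (2 * (D / (1 - ρ))) := by
  induction n with
  | zero => simp
  | succ n ih =>
    have hint : ∀ i, Integrable (fun ω => Y i ω * Y n ω) μ := fun i => (hY i).integrable_mul (hY n)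
    have hint_cross : Integrable (fun ω => 2 * ∑ i ∈ Finset.range (n + 1), Y i ω * Y n ω) μ :=
      (integrable_finsetSum _ fun i _ => hint i).const_mul 2
    have hexpand : ∀ ω, (∑ i ∈ Finset.range (n + 1), Y i ω) ^ 2 + Y n ω ^ 2 =
        (∑ i ∈ Finset.range n, Y i ω) ^ 2 + 2 * ∑ i ∈ Finset.range (n + 1), Y i ω * Y n ω := by
      intro ω
      rw [← Finset.sum_mul, Finset.sum_range_succ]
      ring
    have hsq : ∀ m, Integrable (fun ω => (∑ i ∈ Finset.range m, Y i ω) ^ 2) μ :=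
      fun m => (memLp_finsetSum _ fun i _ => hY i).integrable_sq
    calc ∫ ω, (∑ i ∈ Finset.range (n + 1), Y i ω) ^ 2 ∂μ
        ≤ ∫ ω, (∑ i ∈ Finset.range (n + 1), Y i ω) ^ 2 ∂μ + ∫ ω, Y n ω ^ 2 ∂μ :=
          le_add_of_nonneg_right (integral_nonneg fun ω => sq_nonneg _)
      _ = ∫ ω, (∑ i ∈ Finset.range n, Y i ω) ^ 2 ∂μ
            + 2 * ∑ i ∈ Finset.range (n + 1), ∫ ω, Y i ω * Y n ω ∂μ := by
          rw [← integral_add (hsq _) (hY n).integrable_sq, integral_congr_ae (ae_of_all _ hexpand),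
            integral_add (hsq _) hint_cross, integral_const_mul,
            integral_finsetSum _ fun i _ => hint i]
      _ ≤ n * (2 * (D / (1 - ρ))) + 2 * (D / (1 - ρ)) := by
          gcongr
          exact sum_integral_mul_le_of_abs_integral_mul_le hρ₀ hρ₁ hcov n
      _ = (n + 1 : ℕ) * (2 * (D / (1 - ρ))) := by
          push_cast
          ring

theorem measure_lt_abs_average_le [IsFiniteMeasure μ] (hY : ∀ i, MemLp (Y i) 2 μ)
    (hρ₀ : 0 ≤ ρ) (hρ₁ : ρ < 1)
    (hcov : ∀ i k, |∫ ω, Y i ω * Y (i + k) ω ∂μ| ≤ D * ρ ^ k) {ε : ℝ} (hε : 0 < ε) (n : ℕ) :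
    μ {ω | ε < |(∑ i ∈ Finset.range n, Y i ω) / n|} ≤
      ENNReal.ofReal (2 * (D / (1 - ρ)) / ε ^ 2 * (1 / n)) := by
  rcases n.eq_zero_or_pos with rfl | hn
  · simp [hε.not_gt]
  have hsub : {ω | ε < |(∑ i ∈ Finset.range n, Y i ω) / n|} ⊆
      {ω | (ε * n) ^ 2 ≤ (∑ i ∈ Finset.range n, Y i ω) ^ 2} := by
    intro ω (hω : ε < _)
    rw [abs_div, Nat.abs_cast, lt_div_iff₀ (by positivity)] at hω
    exact (sq_le_sq₀ (by positivity) (abs_nonneg _)).2 hω.le |>.trans_eq (sq_abs _)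
  have hchebyshev := (mul_meas_ge_le_integral_of_nonneg (ae_of_all μ fun ω => sq_nonneg _)
    (memLp_finsetSum (Finset.range n) fun i _ => hY i).integrable_sq ((ε * n) ^ 2)).trans
    (integral_sum_range_sq_le hY hρ₀ hρ₁ hcov n)
  refine (measure_mono hsub).trans ((ENNReal.ofReal_toReal (measure_ne_top μ _)).symm.trans_le
    (ENNReal.ofReal_le_ofReal ?_))
  calc μ.real {ω | (ε * n) ^ 2 ≤ (∑ i ∈ Finset.range n, Y i ω) ^ 2}
      ≤ n * (2 * (D / (1 - ρ))) / (ε * n) ^ 2 := (le_div_iff₀' (by positivity)).2 hchebyshev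
    _ = 2 * (D / (1 - ρ)) / ε ^ 2 * (1 / n) := by field_simp

end SecondMoment

section Doeblin

variable {α : Type*} [MeasurableSpace α] {κ : Kernel α α} {μ ν π₀ : Measure α} {ψ : α → ℝ}
  {a b D : ℝ}

theorem integral_mem_Icc_of_forall_mem_Icc [IsFiniteMeasure μ] (hψ : Measurable ψ)
    (hψ_mem : ∀ x, ψ x ∈ Icc a b) : ∫ x, ψ x ∂μ ∈ Icc (μ.real univ * a) (μ.real univ * b) := by
  have hint : Integrable ψ μ :=
    .of_mem_Icc a b hψ.aemeasurable (ae_of_all _ hψ_mem)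
  rw [← smul_eq_mul, ← smul_eq_mul, ← integral_const, ← integral_const]
  exact ⟨integral_mono (integrable_const a) hint fun x => (hψ_mem x).1,
    integral_mono hint (integrable_const b) fun x => (hψ_mem x).2⟩

/-- The action `ψ ↦ (x ↦ ∫ y, ψ y ∂κ x)` of a kernel on real functions; its iterates are the
`k`-step transition operators of the chain with kernel `κ`. -/
def transitionOp (κ : Kernel α α) (ψ : α → ℝ) (x : α) : ℝ := ∫ y, ψ y ∂κ x

theorem measurable_transitionOp (hψ : Measurable ψ) : Measurable (transitionOp κ ψ) :=
  hψ.stronglyMeasurable.integral_kernel.measurable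

theorem transitionOp_mem_Icc_of_le [IsMarkovKernel κ] [IsFiniteMeasure ν] (hν : ∀ x, ν ≤ κ x)
    (hψ : Measurable ψ) (hψ_mem : ∀ x, ψ x ∈ Icc a (a + D)) (x : α) :
    transitionOp κ ψ x ∈ Icc (∫ y, ψ y ∂ν + (1 - ν.real univ) * a)
      (∫ y, ψ y ∂ν + (1 - ν.real univ) * a + (1 - ν.real univ) * D) := by
  have hint : ∀ (m : Measure α) [IsFiniteMeasure m], Integrable ψ m := fun m _ =>
    .of_mem_Icc a (a + D) hψ.aemeasurable (ae_of_all _ hψ_mem)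
  have hresidual : κ x - ν + ν = κ x := Measure.sub_add_cancel_of_le (hν x)
  have hmass : (κ x - ν).real univ = 1 - ν.real univ := by
    have htotal : (κ x - ν + ν).real univ = 1 := by rw [hresidual, probReal_univ]
    rw [measureReal_add_apply] at htotal
    exact eq_sub_of_add_eq htotal
  have hmem := integral_mem_Icc_of_forall_mem_Icc (μ := κ x - ν) hψ hψ_mem
  have hsplit : transitionOp κ ψ x = ∫ y, ψ y ∂(κ x - ν) + ∫ y, ψ y ∂ν := by
    rw [← integral_add_measure (hint _) (hint _), hresidual, transitionOp]
  rw [hmass, mul_add] at hmem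
  rw [hsplit]
  exact ⟨by linarith [hmem.1], by linarith [hmem.2]⟩

theorem measurable_transitionOp_iterate (hψ : Measurable ψ) (k : ℕ) :
    Measurable ((transitionOp κ)^[k] ψ) := by
  induction k with
  | zero => exact hψ
  | succ k ih =>
    rw [Function.iterate_succ_apply']
    exact measurable_transitionOp ih

theorem exists_transitionOp_iterate_mem_Icc [IsMarkovKernel κ] [IsFiniteMeasure ν]
    (hν : ∀ x, ν ≤ κ x) (hψ : Measurable ψ) (hψ_mem : ∀ x, ψ x ∈ Icc a (a + D)) (k : ℕ) :
    ∃ a', ∀ x, (transitionOp κ)^[k] ψ x ∈ Icc a' (a' + (1 - ν.real univ) ^ k * D) := by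
  induction k with
  | zero => exact ⟨a, by simpa using hψ_mem⟩
  | succ k ih =>
    obtain ⟨a', ha'⟩ := ih
    simp only [Function.iterate_succ_apply', pow_succ', mul_assoc]
    exact ⟨_, transitionOp_mem_Icc_of_le hν (measurable_transitionOp_iterate hψ k) ha'⟩

theorem integral_transitionOp_of_invariant (hπ₀ : Kernel.Invariant κ π₀) (hψ : Integrable ψ π₀) :
    ∫ x, transitionOp κ ψ x ∂π₀ = ∫ x, ψ x ∂π₀ := by
  have hbind : (κ ∘ₖ Kernel.const Unit π₀) () = π₀ := by
    rw [← Measure.comp_eq_comp_const_apply, hπ₀.def]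
  conv_rhs => rw [← hbind]
  rw [Kernel.integral_comp (hbind.symm ▸ hψ), Kernel.const_apply]
  rfl

theorem integral_transitionOp_iterate_of_invariant [IsMarkovKernel κ] [IsFiniteMeasure π₀]
    (hπ₀ : Kernel.Invariant κ π₀) (hψ : Measurable ψ) (hψ_mem : ∀ x, ψ x ∈ Icc a b) (k : ℕ) :
    ∫ x, (transitionOp κ)^[k] ψ x ∂π₀ = ∫ x, ψ x ∂π₀ := by
  induction k generalizing ψ with
  | zero => rfl
  | succ k ih =>
    rw [Function.iterate_succ_apply, ih (measurable_transitionOp hψ),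
      integral_transitionOp_of_invariant hπ₀
        (.of_mem_Icc a b hψ.aemeasurable (ae_of_all _ hψ_mem))]
    exact fun x => by
      simpa [transitionOp] using integral_mem_Icc_of_forall_mem_Icc (μ := κ x) hψ hψ_mem

theorem abs_transitionOp_iterate_sub_integral_le [IsMarkovKernel κ] [IsFiniteMeasure ν]
    [IsProbabilityMeasure π₀] (hν : ∀ x, ν ≤ κ x) (hπ₀ : Kernel.Invariant κ π₀)
    (hψ : Measurable ψ) (hψ_mem : ∀ x, ψ x ∈ Icc a (a + D)) (k : ℕ) (x : α) :
    |(transitionOp κ)^[k] ψ x - ∫ y, ψ y ∂π₀| ≤ (1 - ν.real univ) ^ k * D := by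
  obtain ⟨a', ha'⟩ := exists_transitionOp_iterate_mem_Icc hν hψ hψ_mem k
  have hint : ∫ y, ψ y ∂π₀ ∈ Icc a' (a' + (1 - ν.real univ) ^ k * D) := by
    rw [← integral_transitionOp_iterate_of_invariant hπ₀ hψ hψ_mem k]
    simpa using integral_mem_Icc_of_forall_mem_Icc (μ := π₀)
      (measurable_transitionOp_iterate hψ k) ha'
  exact abs_sub_le_iff.2 ⟨by linarith [(ha' x).2, hint.1], by linarith [(ha' x).1, hint.2]⟩

theorem measureReal_univ_mem_Ioc_of_le {μ ν : Measure α} [IsProbabilityMeasure μ]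
    (hν : ν ≤ μ) (hν₀ : ν ≠ 0) : ν.real univ ∈ Ioc 0 1 := by
  have : IsFiniteMeasure ν := isFiniteMeasure_of_le μ hν
  have : NeZero ν := ⟨hν₀⟩
  refine ⟨measureReal_univ_pos, ?_⟩
  rw [← probReal_univ (μ := μ)]
  exact ENNReal.toReal_mono (measure_ne_top _ _) (hν univ)

end Doeblin

section MarkovChain

variable {α Ω : Type*} [MeasurableSpace α] [MeasurableSpace Ω] {κ : Kernel α α} {P : Measure Ω}
  {W : ℕ → Ω → α}

/-- `W` is, under `P`, a time-homogeneous Markov chain with transition kernel `κ` and arbitrary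
initial law. -/
def IsMarkovChain (κ : Kernel α α) (W : ℕ → Ω → α) (P : Measure Ω) : Prop :=
  ∀ n, HasCondDistrib (W (n + 1)) (fun ω (i : Fin (n + 1)) => W i ω)
    (κ.comap (fun v => v (Fin.last n)) (measurable_pi_apply _)) P

namespace IsMarkovChain

theorem aemeasurable (hW : IsMarkovChain κ W P) (n : ℕ) : AEMeasurable (W n) P :=
  (measurable_pi_apply (Fin.last n)).comp_aemeasurable (hW n).aemeasurable_fst

theorem hasCondDistrib_prodMk [SFinite P] [IsSFiniteKernel κ] (hW : IsMarkovChain κ W P) {i j : ℕ}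
    (hij : i ≤ j) :
    HasCondDistrib (W (j + 1)) (fun ω => (W i ω, W j ω)) (κ.prodMkLeft α) P :=
  (hW j).comp_right (f := fun v : Fin (j + 1) → α => (v ⟨i, by lia⟩, v (Fin.last j)))
    (hf := by fun_prop) (κ := κ.prodMkLeft α)

theorem map_succ [SFinite P] [IsSFiniteKernel κ] (hW : IsMarkovChain κ W P) (n : ℕ) :
    P.map (W (n + 1)) = κ ∘ₘ P.map (W n) := by
  have h : HasCondDistrib (W (n + 1)) (W n) κ P :=
    (hW n).comp_right (hf := measurable_pi_apply (Fin.last n))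
  rw [← Measure.snd_compProd, ← h.map_eq, Measure.snd_map_prodMk₀ h.aemeasurable_fst]

variable {φ ψ : α → ℝ} {B C : ℝ}

theorem integral_mul_succ [IsFiniteMeasure P] [IsMarkovKernel κ] (hW : IsMarkovChain κ W P)
    (hφ : Measurable φ) (hφB : ∀ x, |φ x| ≤ B) (hψ : Measurable ψ) (hψC : ∀ x, |ψ x| ≤ C)
    {i j : ℕ} (hij : i ≤ j) :
    ∫ ω, φ (W i ω) * ψ (W (j + 1) ω) ∂P = ∫ ω, φ (W i ω) * transitionOp κ ψ (W j ω) ∂P := by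
  have h := hW.hasCondDistrib_prodMk hij
  have hmeas : Measurable fun z : (α × α) × α => φ z.1.1 * ψ z.2 := by fun_prop
  have hint : ∀ (m : Measure ((α × α) × α)) [IsFiniteMeasure m],
      Integrable (fun z : (α × α) × α => φ z.1.1 * ψ z.2) m := fun m _ =>
    .of_bound hmeas.aestronglyMeasurable (B * C) <| ae_of_all _ fun z => by
      rw [Real.norm_eq_abs, abs_mul]
      exact mul_le_mul (hφB _) (hψC _) (abs_nonneg _) ((abs_nonneg _).trans (hφB z.1.1))
  calc ∫ ω, φ (W i ω) * ψ (W (j + 1) ω) ∂P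
      = ∫ z, φ z.1.1 * ψ z.2 ∂(P.map (fun ω => (W i ω, W j ω)) ⊗ₘ κ.prodMkLeft α) :=
        h.integral_comp hmeas.aestronglyMeasurable
    _ = ∫ v, φ v.1 * transitionOp κ ψ v.2 ∂P.map (fun ω => (W i ω, W j ω)) := by
        rw [Measure.integral_compProd (hint _)]
        simp_rw [integral_const_mul]
        rfl
    _ = ∫ ω, φ (W i ω) * transitionOp κ ψ (W j ω) ∂P :=
        integral_map h.aemeasurable_fst ((hφ.comp measurable_fst).mul
          ((measurable_transitionOp hψ).comp measurable_snd)).aestronglyMeasurable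

theorem integral_mul_add [IsFiniteMeasure P] [IsMarkovKernel κ] (hW : IsMarkovChain κ W P)
    (hφ : Measurable φ) (hφB : ∀ x, |φ x| ≤ B) (hψ : Measurable ψ) (hψC : ∀ x, |ψ x| ≤ C)
    (i k : ℕ) :
    ∫ ω, φ (W i ω) * ψ (W (i + k) ω) ∂P =
      ∫ ω, φ (W i ω) * (transitionOp κ)^[k] ψ (W i ω) ∂P := by
  induction k generalizing ψ with
  | zero => rfl
  | succ k ih =>
    have hκψ : ∀ x, |transitionOp κ ψ x| ≤ C := fun x => by
      simpa [transitionOp] using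
        norm_integral_le_of_norm_le_const (μ := κ x) (f := ψ) (ae_of_all _ hψC)
    rw [← add_assoc, hW.integral_mul_succ hφ hφB hψ hψC (Nat.le_add_right i k),
      ih (measurable_transitionOp hψ) hκψ, Function.iterate_succ_apply]

theorem abs_integral_mul_add_le {ν π₀ : Measure α} [IsProbabilityMeasure P] [IsMarkovKernel κ]
    [IsFiniteMeasure ν] [IsProbabilityMeasure π₀] (hW : IsMarkovChain κ W P) (hν : ∀ x, ν ≤ κ x)
    (hπ₀ : Kernel.Invariant κ π₀) (hψ : Measurable ψ) (hψC : ∀ x, |ψ x| ≤ C)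
    (hψ₀ : ∫ x, ψ x ∂π₀ = 0) (i k : ℕ) :
    |∫ ω, ψ (W i ω) * ψ (W (i + k) ω) ∂P| ≤ 2 * C ^ 2 * (1 - ν.real univ) ^ k := by
  rw [hW.integral_mul_add hψ hψC hψ hψC, ← Real.norm_eq_abs]
  refine (norm_integral_le_of_norm_le_const (C := 2 * C ^ 2 * (1 - ν.real univ) ^ k)
    (ae_of_all P fun ω => ?_)).trans_eq (by rw [probReal_univ (μ := P), mul_one])
  have hdecay : |(transitionOp κ)^[k] ψ (W i ω)| ≤ (1 - ν.real univ) ^ k * (2 * C) := by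
    have hψ_mem : ∀ x, ψ x ∈ Icc (-C) (-C + 2 * C) := fun x => by
      rw [show -C + 2 * C = C by ring]
      exact abs_le.1 (hψC x)
    simpa [hψ₀] using abs_transitionOp_iterate_sub_integral_le hν hπ₀ hψ hψ_mem k (W i ω)
  calc ‖ψ (W i ω) * (transitionOp κ)^[k] ψ (W i ω)‖
      ≤ C * ((1 - ν.real univ) ^ k * (2 * C)) := by
        rw [norm_mul]
        exact mul_le_mul (hψC _) hdecay (norm_nonneg _) ((abs_nonneg _).trans (hψC (W i ω)))
    _ = 2 * C ^ 2 * (1 - ν.real univ) ^ k := by ring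

end IsMarkovChain

theorem comp_le_of_forall_le {β : Type*} [MeasurableSpace β] {η : Kernel α β} {μ : Measure α}
    {Λ : Measure β} [IsProbabilityMeasure μ] (hη : ∀ x, η x ≤ Λ) : η ∘ₘ μ ≤ Λ := by
  refine Measure.le_iff.2 fun s hs => ?_
  calc (η ∘ₘ μ) s = ∫⁻ x, η x s ∂μ := Measure.bind_apply hs η.aemeasurable
    _ ≤ ∫⁻ _, Λ s ∂μ := lintegral_mono fun x => hη x s
    _ = Λ s := by simp

theorem invariant_le_of_forall_le {π₀ Λ : Measure α} [IsProbabilityMeasure π₀]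
    (hκ : ∀ x, κ x ≤ Λ) (hπ₀ : Kernel.Invariant κ π₀) : π₀ ≤ Λ := by
  rw [← hπ₀.def]
  exact comp_le_of_forall_le hκ

end MarkovChain

section WeakLaw

variable {α Ω ι : Type*} [MeasurableSpace α] [MeasurableSpace Ω] {κ : Kernel α α}
  {W : ℕ → Ω → α} {ν π₀ Λ : Measure α} {F : α → ℝ}

theorem IsMarkovChain.measure_lt_abs_average_sub_integral_le {P : Measure Ω}
    [IsProbabilityMeasure P] [IsMarkovKernel κ] [IsProbabilityMeasure π₀]
    (hW : IsMarkovChain κ W P) (hν : ∀ x, ν ≤ κ x) (hν₀ : ν ≠ 0) (hπ₀ : Kernel.Invariant κ π₀)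
    (hF : Measurable F) {C : ℝ} (hFC : ∀ x, |F x| ≤ C) {ε : ℝ} (hε : 0 < ε) {n : ℕ} (hn : n ≠ 0) :
    P {ω | ε < |(∑ k ∈ Finset.range n, F (W k ω)) / n - ∫ x, F x ∂π₀|} ≤
      ENNReal.ofReal (2 * (2 * (2 * C) ^ 2 / ν.real univ) / ε ^ 2 * (1 / n)) := by
  obtain ⟨x₀⟩ := π₀.nonempty_of_neZero
  have hfin : IsFiniteMeasure ν := isFiniteMeasure_of_le (κ x₀) (hν x₀)
  obtain ⟨hc₀, hc₁⟩ := measureReal_univ_mem_Ioc_of_le (hν x₀) hν₀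
  set m := ∫ x, F x ∂π₀ with hm
  have hmC : |m| ≤ C := by
    simpa using norm_integral_le_of_norm_le_const (μ := π₀) (f := F) (ae_of_all _ hFC)
  have hψ : Measurable fun x => F x - m := hF.sub_const m
  have hψC : ∀ x, |F x - m| ≤ 2 * C := fun x => by linarith [abs_sub (F x) m, hFC x]
  have hψ₀ : ∫ x, F x - m ∂π₀ = 0 := by
    rw [integral_sub (.of_bound hF.aestronglyMeasurable C (ae_of_all _ hFC)) (integrable_const m)]
    simp [hm]
  convert measure_lt_abs_average_le (μ := P) (Y := fun k ω => F (W k ω) - m)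
    (fun k => .of_bound (hψ.comp_aemeasurable (hW.aemeasurable k)).aestronglyMeasurable
      (2 * C) (ae_of_all _ fun ω => hψC _))
    (sub_nonneg.2 hc₁) (sub_lt_self _ hc₀)
    (hW.abs_integral_mul_add_le hν hπ₀ hψ hψC hψ₀) hε n using 5 with ω
  · rw [Finset.sum_sub_distrib, Finset.sum_const, Finset.card_range, nsmul_eq_mul, sub_div,
      mul_div_cancel_left₀ _ (by positivity)]
  · rw [sub_sub_cancel (1 : ℝ)]

theorem IsMarkovChain.lintegral_succ_le {P : Measure Ω} [IsProbabilityMeasure P]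
    [IsSFiniteKernel κ] (hW : IsMarkovChain κ W P) (hκ : ∀ x, κ x ≤ Λ) {g : α → ℝ≥0∞}
    (hg : Measurable g) (n : ℕ) : ∫⁻ ω, g (W (n + 1) ω) ∂P ≤ ∫⁻ x, g x ∂Λ := by
  have : IsProbabilityMeasure (P.map (W n)) := Measure.isProbabilityMeasure_map (hW.aemeasurable n)
  rw [← lintegral_map' hg.aemeasurable (hW.aemeasurable (n + 1)), hW.map_succ]
  exact lintegral_mono' (comp_le_of_forall_le hκ) le_rfl

theorem IsMarkovChain.sum_lintegral_le {P : Measure Ω} [IsProbabilityMeasure P]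
    [IsSFiniteKernel κ] (hW : IsMarkovChain κ W P) (hκ : ∀ x, κ x ≤ Λ) {g : α → ℝ≥0∞}
    (hg : Measurable g) (n : ℕ) :
    ∑ k ∈ Finset.range n, ∫⁻ ω, g (W k ω) ∂P ≤ ∫⁻ ω, g (W 0 ω) ∂P + n * ∫⁻ x, g x ∂Λ :=
  calc ∑ k ∈ Finset.range n, ∫⁻ ω, g (W k ω) ∂P
      ≤ ∑ k ∈ Finset.range (n + 1), ∫⁻ ω, g (W k ω) ∂P :=
        Finset.sum_le_sum_of_subset (Finset.range_subset_range.2 n.le_succ)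
    _ = ∫⁻ ω, g (W 0 ω) ∂P + ∑ k ∈ Finset.range n, ∫⁻ ω, g (W (k + 1) ω) ∂P := by
        rw [Finset.sum_range_succ', add_comm]
    _ ≤ ∫⁻ ω, g (W 0 ω) ∂P + n * ∫⁻ x, g x ∂Λ := by
        gcongr
        simpa using
          Finset.sum_le_card_nsmul (Finset.range n) _ _ fun k _ => hW.lintegral_succ_le hκ hg k

theorem IsMarkovChain.lintegral_enorm_average_le {P : Measure Ω} [IsProbabilityMeasure P]
    [IsSFiniteKernel κ] (hW : IsMarkovChain κ W P) (hκ : ∀ x, κ x ≤ Λ) (hF : Measurable F) (n : ℕ) :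
    ∫⁻ ω, ‖(∑ k ∈ Finset.range n, F (W k ω)) / n‖ₑ ∂P ≤
      (∫⁻ ω, ‖F (W 0 ω)‖ₑ ∂P) / n + ∫⁻ x, ‖F x‖ₑ ∂Λ := by
  rcases n.eq_zero_or_pos with rfl | hn
  · simp
  have hFW : ∀ k, AEMeasurable (fun ω => ‖F (W k ω)‖ₑ) P := fun k =>
    hF.enorm.comp_aemeasurable (hW.aemeasurable k)
  calc ∫⁻ ω, ‖(∑ k ∈ Finset.range n, F (W k ω)) / n‖ₑ ∂P
      ≤ ∫⁻ ω, (∑ k ∈ Finset.range n, ‖F (W k ω)‖ₑ) * (n : ℝ≥0∞)⁻¹ ∂P := by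
        refine lintegral_mono fun ω => ?_
        rw [div_eq_mul_inv, enorm_mul, enorm_inv (by positivity), Real.enorm_natCast]
        gcongr
        exact enorm_sum_le _ _
    _ = (∑ k ∈ Finset.range n, ∫⁻ ω, ‖F (W k ω)‖ₑ ∂P) / n := by
        rw [lintegral_mul_const' _ _ (by simpa using hn.ne'),
          lintegral_finsetSum' _ fun k _ => hFW k, div_eq_mul_inv]
    _ ≤ (∫⁻ ω, ‖F (W 0 ω)‖ₑ ∂P + n * ∫⁻ x, ‖F x‖ₑ ∂Λ) / n := by
        gcongr
        exact hW.sum_lintegral_le hκ hF.enorm n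
    _ = (∫⁻ ω, ‖F (W 0 ω)‖ₑ ∂P) / n + ∫⁻ x, ‖F x‖ₑ ∂Λ := by
        rw [ENNReal.add_div, mul_comm, ENNReal.mul_div_cancel_right (by positivity)
          (natCast_ne_top n)]

variable {P : ι → Measure Ω} [∀ i, IsProbabilityMeasure (P i)] [IsMarkovKernel κ]
  [IsProbabilityMeasure π₀]

theorem tendstoInProbUniformly_average_of_bounded (hW : ∀ i, IsMarkovChain κ W (P i))
    (hν : ∀ x, ν ≤ κ x) (hν₀ : ν ≠ 0) (hπ₀ : Kernel.Invariant κ π₀) (hF : Measurable F) {C : ℝ}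
    (hFC : ∀ x, |F x| ≤ C) :
    TendstoInProbUniformly P (fun (n : ℕ) ω => (∑ k ∈ Finset.range n, F (W k ω)) / n) atTop
      (∫ x, F x ∂π₀) := by
  intro ε hε
  have hlim : Tendsto (fun n : ℕ => ENNReal.ofReal
      (2 * (2 * (2 * C) ^ 2 / ν.real univ) / ε ^ 2 * (1 / n))) atTop (𝓝 0) := by
    simpa using ENNReal.tendsto_ofReal (tendsto_one_div_atTop_nhds_zero_nat.const_mul
      (2 * (2 * (2 * C) ^ 2 / ν.real univ) / ε ^ 2))
  exact tendsto_of_tendsto_of_tendsto_of_le_of_le' tendsto_const_nhds hlim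
    (Eventually.of_forall fun _ => zero_le) ((eventually_ne_atTop 0).mono fun n hn =>
      iSup_le fun i => (hW i).measure_lt_abs_average_sub_integral_le hν hν₀ hπ₀ hF hFC hε hn)

theorem eventually_forall_lintegral_enorm_average_le (hW : ∀ i, IsMarkovChain κ W (P i))
    (hκ : ∀ x, κ x ≤ Λ) (hF : Measurable F) {R δ : ℝ≥0∞} (hR : R ≠ ∞)
    (hF₀ : ∀ i, ∫⁻ ω, ‖F (W 0 ω)‖ₑ ∂P i ≤ R) (hFδ : ∫⁻ x, ‖F x‖ₑ ∂Λ < δ) :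
    ∀ᶠ n : ℕ in atTop, ∀ i, ∫⁻ ω, ‖(∑ k ∈ Finset.range n, F (W k ω)) / n‖ₑ ∂P i ≤ δ := by
  have hlim : Tendsto (fun n : ℕ => R / n + ∫⁻ x, ‖F x‖ₑ ∂Λ) atTop (𝓝 (∫⁻ x, ‖F x‖ₑ ∂Λ)) := by
    simpa using (ENNReal.Tendsto.const_div ENNReal.tendsto_nat_nhds_top (.inr hR)).add_const
      (∫⁻ x, ‖F x‖ₑ ∂Λ)
  filter_upwards [hlim.eventually_le_const hFδ] with n hn i
  refine ((hW i).lintegral_enorm_average_le hκ hF n).trans (le_trans ?_ hn)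
  gcongr
  exact hF₀ i

theorem tendstoInProbUniformly_average (hW : ∀ i, IsMarkovChain κ W (P i))
    (hν : ∀ x, ν ≤ κ x) (hν₀ : ν ≠ 0) (hκ : ∀ x, κ x ≤ Λ) (hπ₀ : Kernel.Invariant κ π₀)
    (hF : Measurable F) (hFΛ : Integrable F Λ) {R : ℝ≥0∞} (hR : R ≠ ∞)
    (hF₀ : ∀ i, ∫⁻ ω, ‖F (W 0 ω)‖ₑ ∂P i ≤ R) :
    TendstoInProbUniformly P (fun (n : ℕ) ω => (∑ k ∈ Finset.range n, F (W k ω)) / n) atTop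
      (∫ x, F x ∂π₀) := by
  have hπΛ : π₀ ≤ Λ := invariant_le_of_forall_le hκ hπ₀
  refine .of_forall_exists_lintegral_sub_le fun δ hδ => ?_
  obtain ⟨G, hFG, hGΛ⟩ := (memLp_one_iff_integrable.2 hFΛ).exists_simpleFunc_eLpNorm_sub_lt
    one_ne_top (ENNReal.ofReal_pos.2 hδ).ne'
  obtain ⟨C, hGC⟩ := G.exists_forall_norm_le
  have hFGm : Measurable fun x => F x - G x := hF.sub G.measurable
  have hGint : Integrable G Λ := memLp_one_iff_integrable.1 hGΛ
  replace hFG : ∫⁻ x, ‖F x - G x‖ₑ ∂Λ < ENNReal.ofReal δ := by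
    simpa only [eLpNorm_one_eq_lintegral_enorm, Pi.sub_apply] using hFG
  refine ⟨_, _, tendstoInProbUniformly_average_of_bounded hW hν hν₀ hπ₀ G.measurable hGC, ?_, ?_⟩
  · rw [abs_sub_comm, ← integral_sub (hFΛ.mono_measure hπΛ) (hGint.mono_measure hπΛ),
      ← Real.norm_eq_abs, ← ofReal_le_ofReal_iff hδ.le, ofReal_norm]
    exact (enorm_integral_le_lintegral_enorm _).trans ((lintegral_mono' hπΛ le_rfl).trans hFG.le)
  · have hFG₀ : ∀ i, ∫⁻ ω, ‖F (W 0 ω) - G (W 0 ω)‖ₑ ∂P i ≤ R + ENNReal.ofReal C := fun i =>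
      calc ∫⁻ ω, ‖F (W 0 ω) - G (W 0 ω)‖ₑ ∂P i
          ≤ ∫⁻ ω, ‖F (W 0 ω)‖ₑ + ENNReal.ofReal C ∂P i := lintegral_mono fun ω =>
            enorm_sub_le.trans (by gcongr; rw [← ofReal_norm]; exact ofReal_le_ofReal (hGC _))
        _ = ∫⁻ ω, ‖F (W 0 ω)‖ₑ ∂P i + ENNReal.ofReal C := by
            rw [lintegral_add_right _ measurable_const, lintegral_const, measure_univ, mul_one]
        _ ≤ R + ENNReal.ofReal C := by gcongr; exact hF₀ i
    filter_upwards [eventually_forall_lintegral_enorm_average_le hW hκ hFGm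
      (add_ne_top.2 ⟨hR, ofReal_ne_top⟩) hFG₀ hFG] with n hn i
    simp_rw [← sub_div, ← Finset.sum_sub_distrib]
    exact ⟨(Finset.aemeasurable_fun_sum _ fun k _ =>
      hFGm.comp_aemeasurable ((hW i).aemeasurable k)).div_const _, hn i⟩

end WeakLaw

section ExponentialLaw

theorem expMeasE_of_pos {ρ : ℝ} (hρ : 0 < ρ) :
    expMeasE ρ = (expMeasure ρ).map ENNReal.ofReal := by
  rw [expMeasE, if_pos hρ, expMeasure, gammaMeasure]
  congr 1
  refine withDensity_congr_ae ?_
  filter_upwards [measure_eq_zero_iff_ae_notMem.1 (Real.volume_singleton (a := 0))] with s hs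
  rcases lt_or_gt_of_ne (hs : s ≠ 0) with h | h
  · rw [indicator_of_notMem (notMem_Ioi.2 h.le), gammaPDF_of_neg h]
  · simp [gammaPDF_of_nonneg h.le, h]

theorem expMeasE_of_nonpos {ρ : ℝ} (hρ : ρ ≤ 0) : expMeasE ρ = Measure.dirac ∞ :=
  if_neg hρ.not_gt

instance isProbabilityMeasure_expMeasE (ρ : ℝ) : IsProbabilityMeasure (expMeasE ρ) := by
  rcases le_or_gt ρ 0 with hρ | hρ
  · rw [expMeasE_of_nonpos hρ]
    infer_instance
  · have := isProbabilityMeasure_expMeasure hρ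
    rw [expMeasE_of_pos hρ]
    exact Measure.isProbabilityMeasure_map ENNReal.measurable_ofReal.aemeasurable

theorem lintegral_id_expMeasE (ρ : ℝ) : ∫⁻ s, s ∂expMeasE ρ = (ENNReal.ofReal ρ)⁻¹ := by
  rcases le_or_gt ρ 0 with hρ | hρ
  · simp [expMeasE_of_nonpos hρ, ofReal_of_nonpos hρ]
  -- `s` times the exponential density is, up to the factor `ρ⁻¹`, the density of the law `Γ(2, ρ)`.
  have hdensity : ∀ s,
      gammaPDF 1 ρ s * ENNReal.ofReal s = (ENNReal.ofReal ρ)⁻¹ * gammaPDF 2 ρ s := by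
    intro s
    rcases lt_or_ge s 0 with hs | hs
    · simp [gammaPDF_of_neg hs]
    · rw [gammaPDF_of_nonneg hs, gammaPDF_of_nonneg hs, ← ofReal_inv_of_pos hρ,
        ← ofReal_mul (by positivity), ← ofReal_mul (by positivity)]
      norm_num
      congr 1
      field_simp
  have hmeas : ∀ a, Measurable (gammaPDF a ρ) := fun a =>
    (measurable_gammaPDFReal a ρ).ennreal_ofReal
  rw [expMeasE_of_pos hρ, lintegral_map measurable_id' ENNReal.measurable_ofReal, expMeasure,
    gammaMeasure, lintegral_withDensity_eq_lintegral_mul _ (hmeas 1) ENNReal.measurable_ofReal]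
  simp only [Pi.mul_apply, hdensity]
  rw [lintegral_const_mul _ (hmeas 2), lintegral_gammaPDF_eq_one two_pos hρ, mul_one]

theorem measurable_expMeasE : Measurable expMeasE := by
  refine Measurable.ite (measurableSet_lt measurable_const measurable_id)
    (Measure.measurable_of_measurable_coe _ fun s hs => ?_) measurable_const
  have hdensity : Measurable fun z : ℝ × ℝ =>
      (Ioi (0 : ℝ)).indicator (fun s => ENNReal.ofReal (z.1 * Real.exp (-(z.1 * s)))) z.2 :=
    Measurable.ite (measurable_snd measurableSet_Ioi) (by fun_prop) measurable_const
  simp_rw [Measure.map_apply ENNReal.measurable_ofReal hs,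
    withDensity_apply _ (ENNReal.measurable_ofReal hs)]
  exact hdensity.lintegral_prod_right'

variable {α : Type*} [MeasurableSpace α] {ρ : α → ℝ}

/-- The law of the holding time at `x` when the chain leaves `x` at rate `ρ x`. -/
def holdingKernel (ρ : α → ℝ) (hρ : Measurable ρ) : Kernel α ℝ≥0∞ where
  toFun x := expMeasE (ρ x)
  measurable' := measurable_expMeasE.comp hρ

theorem holdingKernel_apply (hρ : Measurable ρ) (x : α) :
    holdingKernel ρ hρ x = expMeasE (ρ x) := rfl

instance isMarkovKernel_holdingKernel (hρ : Measurable ρ) : IsMarkovKernel (holdingKernel ρ hρ) :=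
  ⟨fun x => isProbabilityMeasure_expMeasE (ρ x)⟩

end ExponentialLaw

theorem indicator_eq_indicator_one_mul {α : Type*} (s : Set α) (g : α → ℝ≥0∞) (x : α) :
    s.indicator g x = s.indicator 1 x * g x := by
  by_cases hx : x ∈ s <;> simp [hx]

theorem indicator_pi_prod_one {ι α β : Type*} [Fintype ι] (A : ι → Set α) (B : ι → Set β)
    (v : ι → α × β) :
    (univ.pi fun i => A i ×ˢ B i).indicator (1 : (ι → α × β) → ℝ≥0∞) v =
      ∏ i, (A i).indicator 1 (v i).1 * (B i).indicator 1 (v i).2 := by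
  rw [← Finset.coe_univ, indicator_pi_one_apply]
  exact Finset.prod_congr rfl fun i _ => indicator_prod_one

section MarkedChain

variable {α β : Type*} [MeasurableSpace α] [MeasurableSpace β]

/-- The transition kernel of a Markov chain with kernel `κ` whose states carry independent marks,
the mark of a state `x` having law `η x`. -/
def markedKernel (κ : Kernel α α) (η : Kernel α β) : Kernel (α × β) (α × β) :=
  ((Kernel.id ×ₖ η) ∘ₖ κ).comap Prod.fst measurable_fst

variable {κ : Kernel α α} {η : Kernel α β} {μ ν π₀ : Measure α}

theorem markedKernel_apply [IsSFiniteKernel κ] [IsSFiniteKernel η] (z : α × β) :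
    markedKernel κ η z = κ z.1 ⊗ₘ η := by
  rw [Measure.compProd_eq_comp_prod, markedKernel, Kernel.comap_apply, Kernel.comp_apply]

instance [IsMarkovKernel κ] [IsMarkovKernel η] : IsMarkovKernel (markedKernel κ η) := by
  unfold markedKernel
  infer_instance

theorem invariant_markedKernel [IsMarkovKernel η] [SFinite π₀] (hπ₀ : Kernel.Invariant κ π₀) :
    Kernel.Invariant (markedKernel κ η) (π₀ ⊗ₘ η) := by
  rw [Kernel.Invariant, markedKernel, ← Kernel.comp_deterministic_eq_comap, ← Measure.comp_assoc,
    Measure.deterministic_comp_eq_map, ← Measure.fst, Measure.fst_compProd, ← Measure.comp_assoc,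
    hπ₀.def, Measure.compProd_eq_comp_prod]

theorem compProd_mono_left [SFinite μ] [SFinite ν] [IsSFiniteKernel η] (h : μ ≤ ν) :
    μ ⊗ₘ η ≤ ν ⊗ₘ η := by
  refine Measure.le_iff.2 fun s hs => ?_
  rw [Measure.compProd_apply hs, Measure.compProd_apply hs]
  exact lintegral_mono' h le_rfl

theorem measure_pi_prod_ext {ι X : Type*} [Finite ι] [mX : MeasurableSpace X] {C : Set (Set X)}
    (hC : mX = MeasurableSpace.generateFrom C) (hC_inter : IsPiSystem C) (hC_univ : univ ∈ C)
    {μ ν : Measure ((ι → X) × X)} [IsFiniteMeasure μ]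
    (h : ∀ s : ι → Set X, (∀ i, s i ∈ C) → ∀ t ∈ C, μ (univ.pi s ×ˢ t) = ν (univ.pi s ×ˢ t)) :
    μ = ν := by
  have hC_span : IsCountablySpanning C := ⟨fun _ => univ, fun _ => hC_univ, iUnion_const _⟩
  have hpi_span : IsCountablySpanning (univ.pi '' univ.pi fun _ : ι => C) :=
    .pi fun _ => hC_span
  refine ext_of_generate_finite _ ?_ ((IsPiSystem.pi fun _ : ι => hC_inter).prod hC_inter) ?_ ?_
  · rw [← generateFrom_prod_eq hpi_span hC_span, ← generateFrom_pi_eq fun _ => hC_span, ← hC]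
  · rintro _ ⟨_, ⟨s, hs, rfl⟩, t, ht, rfl⟩
    exact h s (fun i => hs i (mem_univ i)) t ht
  · simpa using h (fun _ => univ) (fun _ => hC_univ) univ hC_univ

theorem measure_pi_prod_mark_ext {ι : Type*} [Finite ι] {μ ν : Measure ((ι → α × β) × (α × β))}
    [IsFiniteMeasure μ]
    (h : ∀ (A : ι → Set α) (B : ι → Set β) (A' : Set α) (B' : Set β), (∀ i, MeasurableSet (A i)) →
      (∀ i, MeasurableSet (B i)) → MeasurableSet A' → MeasurableSet B' →
      μ ((univ.pi fun i => A i ×ˢ B i) ×ˢ (A' ×ˢ B')) =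
        ν ((univ.pi fun i => A i ×ˢ B i) ×ˢ (A' ×ˢ B'))) :
    μ = ν := by
  refine measure_pi_prod_ext generateFrom_prod.symm isPiSystem_prod
    ⟨univ, .univ, univ, .univ, univ_prod_univ⟩ fun s hs t ⟨A', hA', B', hB', ht⟩ => ?_
  choose A hA B hB hAB using hs
  rw [← funext hAB, ← ht]
  exact h A B A' B' hA hB hA' hB'

end MarkedChain

namespace IsChainLaw

variable {α : Type*} [MeasurableSpace α] {ρ : α → ℝ} {κ : Kernel α α} {x : α}
  {P : Measure (Traj α)}

theorem lintegral_prod_mul_succ (hP : IsChainLaw ρ κ x P) (hρ : Measurable ρ) {n : ℕ}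
    {a : Fin (n + 1) → α → ℝ≥0∞} (ha : ∀ i, Measurable (a i))
    {b : Fin (n + 1) → ℝ≥0∞ → ℝ≥0∞} (hb : ∀ i, Measurable (b i))
    {a' : α → ℝ≥0∞} (ha' : Measurable a') {b' : ℝ≥0∞ → ℝ≥0∞} (hb' : Measurable b') :
    ∫⁻ ω, (∏ i, a i (ω.1 i) * b i (ω.2 i)) * (a' (ω.1 (n + 1)) * b' (ω.2 (n + 1))) ∂P =
      ∫⁻ ω, (∏ i, a i (ω.1 i) * b i (ω.2 i)) *
        ∫⁻ y, a' y * ∫⁻ s, b' s ∂expMeasE (ρ y) ∂κ (ω.1 n) ∂P := by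
  have hη : ∀ {g : ℝ≥0∞ → ℝ≥0∞}, Measurable g → Measurable fun y => ∫⁻ s, g s ∂expMeasE (ρ y) :=
    fun hg => hg.lintegral_kernel (κ := holdingKernel ρ hρ)
  have hg' : Measurable fun y => a' y * ∫⁻ s, b' s ∂expMeasE (ρ y) := ha'.mul (hη hb')
  calc ∫⁻ ω, (∏ i, a i (ω.1 i) * b i (ω.2 i)) * (a' (ω.1 (n + 1)) * b' (ω.2 (n + 1))) ∂P
      = ∫⁻ ω, (∏ i, a i (ω.1 i)) * a' (ω.1 (n + 1)) *
          ∏ i : Fin (n + 2), (Fin.snoc b b' : Fin (n + 2) → ℝ≥0∞ → ℝ≥0∞) i (ω.2 i) ∂P := by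
        refine lintegral_congr fun ω => ?_
        rw [Fin.prod_univ_castSucc (n := n + 1)]
        simp only [Finset.prod_mul_distrib, Fin.snoc_castSucc, Fin.snoc_last, Fin.val_castSucc,
          Fin.val_last]
        ring
    _ = ∫⁻ ω, (∏ i, a i (ω.1 i) * ∫⁻ s, b i s ∂expMeasE (ρ (ω.1 i))) *
          (a' (ω.1 (n + 1)) * ∫⁻ s, b' s ∂expMeasE (ρ (ω.1 (n + 1)))) ∂P := by
        rw [hP.holding (n + 2) (fun z => (∏ i, a i (z i)) * a' (z (n + 1))) _ (by fun_prop)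
          (Fin.lastCases (by simpa using hb') (by simpa using hb))]
        refine lintegral_congr fun ω => ?_
        rw [Fin.prod_univ_castSucc (n := n + 1)]
        simp only [Finset.prod_mul_distrib, Fin.snoc_castSucc, Fin.snoc_last, Fin.val_castSucc,
          Fin.val_last]
        ring
    _ = ∫⁻ ω, (∏ i, a i (ω.1 i) * ∫⁻ s, b i s ∂expMeasE (ρ (ω.1 i))) *
          ∫⁻ y, a' y * ∫⁻ s, b' s ∂expMeasE (ρ y) ∂κ (ω.1 n) ∂P :=
        hP.markov n (fun v => ∏ i, a i (v i) * ∫⁻ s, b i s ∂expMeasE (ρ (v i))) _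
          (Finset.measurable_fun_prod _ fun i _ =>
            ((ha i).mul (hη (hb i))).comp (measurable_pi_apply i)) hg'
    _ = _ := by
        have h := hP.holding (n + 1) (fun z => (∏ i : Fin (n + 1), a i (z i)) *
          ∫⁻ y, a' y * ∫⁻ s, b' s ∂expMeasE (ρ y) ∂κ (z n)) b
          (.mul (by fun_prop) ((hg'.lintegral_kernel (κ := κ)).comp (measurable_pi_apply n))) hb
        simp only [Finset.prod_mul_distrib, mul_right_comm] at h ⊢
        exact h.symm

theorem isMarkovChain [IsMarkovKernel κ] (hP : IsChainLaw ρ κ x P) (hρ : Measurable ρ) :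
    IsMarkovChain (markedKernel κ (holdingKernel ρ hρ)) (fun n ω => (ω.1 n, ω.2 n)) P := by
  have := hP.prob
  refine fun n => ⟨by fun_prop, measure_pi_prod_mark_ext fun A B A' B' hA hB hA' hB' => ?_⟩
  have hs : MeasurableSet (univ.pi fun i => A i ×ˢ B i) := .univ_pi fun i => (hA i).prod (hB i)
  have hstep : ∀ z, markedKernel κ (holdingKernel ρ hρ) z (A' ×ˢ B') =
      ∫⁻ y, A'.indicator 1 y * ∫⁻ s, B'.indicator 1 s ∂expMeasE (ρ y) ∂κ z.1 := fun z => by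
    rw [markedKernel_apply, Measure.compProd_apply_prod hA' hB', ← lintegral_indicator hA']
    refine lintegral_congr fun y => ?_
    rw [lintegral_indicator_one hB', indicator_eq_indicator_one_mul, holdingKernel_apply]
  calc P.map (fun ω => (fun i : Fin (n + 1) => (ω.1 i, ω.2 i), ω.1 (n + 1), ω.2 (n + 1)))
        ((univ.pi fun i => A i ×ˢ B i) ×ˢ (A' ×ˢ B'))
      = ∫⁻ ω, (∏ i, (A i).indicator 1 (ω.1 i) * (B i).indicator 1 (ω.2 i)) *
        (A'.indicator 1 (ω.1 (n + 1)) * B'.indicator 1 (ω.2 (n + 1))) ∂P := by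
        rw [← lintegral_indicator_one (hs.prod (hA'.prod hB')),
          lintegral_map (measurable_one.indicator (hs.prod (hA'.prod hB'))) (by fun_prop)]
        simp only [indicator_prod_one, indicator_pi_prod_one]
    _ = ∫⁻ ω, (∏ i, (A i).indicator 1 (ω.1 i) * (B i).indicator 1 (ω.2 i)) *
        markedKernel κ (holdingKernel ρ hρ) (ω.1 n, ω.2 n) (A' ×ˢ B') ∂P := by
        simp only [hstep]
        exact hP.lintegral_prod_mul_succ hρ (fun i => measurable_one.indicator (hA i))
          (fun i => measurable_one.indicator (hB i)) (measurable_one.indicator hA')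
          (measurable_one.indicator hB')
    _ = _ := by
        rw [Measure.compProd_apply_prod hs (hA'.prod hB'), ← lintegral_indicator hs,
          lintegral_map ((Kernel.measurable_coe _ (hA'.prod hB')).indicator hs) (by fun_prop)]
        refine lintegral_congr fun ω => ?_
        rw [indicator_eq_indicator_one_mul, indicator_pi_prod_one]
        rfl

end IsChainLaw

section JumpPath

theorem measurable_sInf_nat {X : Type*} [MeasurableSpace X] {p : X → ℕ → Prop}
    (hp : ∀ n, MeasurableSet {x | p x n}) : Measurable fun x => sInf {n | p x n} := by
  classical
  -- Where no `n` qualifies, the junk value `sInf ∅ = 0` is the least `n` of the second alternative.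
  have hq : ∀ x, ∃ n, p x n ∨ ∀ m, ¬ p x m := fun x => by
    by_cases h : ∃ n, p x n
    exacts [h.imp fun _ => .inl, ⟨0, .inr (not_exists.1 h)⟩]
  have hq_meas : ∀ n, MeasurableSet {x | p x n ∨ ∀ m, ¬ p x m} := fun n => by
    simp only [ofPred_or, ofPred_forall]
    exact (hp n).union (.iInter fun m => (hp m).compl)
  convert measurable_find hq hq_meas using 2 with x
  refine ((Nat.find_eq_iff _).2 ?_).symm
  by_cases h : ∃ n, p x n
  · refine ⟨.inl (Nat.sInf_mem h), fun n hn hn' => hn'.elim (Nat.notMem_of_lt_sInf hn) ?_⟩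
    exact not_forall_not.2 h
  · simp [not_exists.1 h]

namespace Traj

variable {α : Type*} {ω : Traj α} {f : α → ℝ} {B T : ℝ} {n : ℕ}

theorem jumpTime_succ (n : ℕ) (ω : Traj α) : jumpTime (n + 1) ω = jumpTime n ω + ω.2 n :=
  Finset.sum_range_succ _ _

theorem monotone_jumpTime (ω : Traj α) : Monotone fun n => jumpTime n ω :=
  monotone_nat_of_le_succ fun n => (jumpTime_succ n ω).symm ▸ le_self_add

theorem pos_eq_of_mem_Ico {t : ℝ} {n : ℕ}
    (ht : ENNReal.ofReal t ∈ Ico (jumpTime n ω) (jumpTime (n + 1) ω)) : pos t ω = ω.1 n := by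
  have hn : IsLeast {k | ENNReal.ofReal t < jumpTime (k + 1) ω} n := by
    refine ⟨ht.2, fun k hk => ?_⟩
    by_contra! hkn
    exact (hk.trans_le (monotone_jumpTime ω hkn)).not_ge ht.1
  rw [pos, hn.csInf_eq]

theorem measurable_comp_pos (f : α → ℝ) (ω : Traj α) : Measurable fun t => f (pos t ω) :=
  (measurable_from_nat (f := fun k => f (ω.1 k))).comp
    (measurable_sInf_nat fun _ => measurableSet_lt ENNReal.measurable_ofReal measurable_const)

theorem intervalIntegrable_comp_pos (hf : ∀ x, |f x| ≤ B) (ω : Traj α) (a b : ℝ) :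
    IntervalIntegrable (fun t => f (pos t ω)) volume a b :=
  (intervalIntegrable_const (c := B)).mono_fun' (measurable_comp_pos f ω).aestronglyMeasurable
    (ae_of_all _ fun t => hf (pos t ω))

theorem integral_comp_pos_jumpTime (hf : ∀ x, |f x| ≤ B) (hω : ∀ i < n, ω.2 i ≠ ∞) :
    ∫ t in (0)..(jumpTime n ω).toReal, f (pos t ω) =
      ∑ i ∈ Finset.range n, f (ω.1 i) * (ω.2 i).toReal := by
  have hT : ∀ k ≤ n, jumpTime k ω ≠ ∞ := fun k hk =>
    sum_ne_top.2 fun i hi => hω i ((Finset.mem_range.1 hi).trans_le hk)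
  rw [show (0 : ℝ) = (jumpTime 0 ω).toReal by simp [jumpTime],
    ← intervalIntegral.sum_integral_adjacent_intervals fun k _ =>
      intervalIntegrable_comp_pos hf ω (jumpTime k ω).toReal (jumpTime (k + 1) ω).toReal]
  refine Finset.sum_congr rfl fun k hk => ?_
  have hk : k < n := Finset.mem_range.1 hk
  have hsucc : (jumpTime (k + 1) ω).toReal = (jumpTime k ω).toReal + (ω.2 k).toReal := by
    rw [jumpTime_succ, toReal_add (hT k hk.le) (hω k hk)]
  have hle : (jumpTime k ω).toReal ≤ (jumpTime (k + 1) ω).toReal :=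
    toReal_mono (hT _ hk) (monotone_jumpTime ω k.le_succ)
  calc ∫ t in (jumpTime k ω).toReal..(jumpTime (k + 1) ω).toReal, f (pos t ω)
      = ∫ t in Ico (jumpTime k ω).toReal (jumpTime (k + 1) ω).toReal, f (pos t ω) := by
        rw [intervalIntegral.integral_of_le hle, integral_Ico_eq_integral_Ioc]
    _ = ∫ _ in Ico (jumpTime k ω).toReal (jumpTime (k + 1) ω).toReal, f (ω.1 k) := by
        refine setIntegral_congr_fun measurableSet_Ico fun t ht => congrArg f (pos_eq_of_mem_Ico ?_)
        have ht₀ : 0 ≤ t := toReal_nonneg.trans ht.1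
        exact ⟨(le_ofReal_iff_toReal_le (hT k hk.le) ht₀).2 ht.1,
          (ofReal_lt_iff_lt_toReal ht₀ (hT (k + 1) hk)).2 ht.2⟩
    _ = f (ω.1 k) * (ω.2 k).toReal := by
        rw [setIntegral_const, Real.volume_real_Ico_of_le hle, hsucc, add_sub_cancel_left,
          smul_eq_mul, mul_comm]

theorem abs_setIntegral_comp_pos_sub_sum_le (hf : ∀ x, |f x| ≤ B) (hω : ∀ i, ω.2 i ≠ ∞)
    (hT : 0 ≤ T) (n : ℕ) :
    |(∫ t in Ioc 0 T, f (pos t ω)) - ∑ i ∈ Finset.range n, f (ω.1 i) * (ω.2 i).toReal| ≤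
      B * |∑ i ∈ Finset.range n, (ω.2 i).toReal - T| := by
  rw [← intervalIntegral.integral_of_le hT, ← integral_comp_pos_jumpTime hf fun i _ => hω i,
    ← toReal_sum fun i _ => hω i, abs_sub_comm _ T,
    intervalIntegral.integral_interval_sub_left (intervalIntegrable_comp_pos hf ω _ _)
      (intervalIntegrable_comp_pos hf ω _ _)]
  exact intervalIntegral.norm_integral_le_of_norm_le_const (f := fun t => f (pos t ω))
    fun t _ => hf (pos t ω)

theorem abs_average_sub_div_sum_le (hf : ∀ x, |f x| ≤ B) (hω : ∀ i, ω.2 i ≠ ∞) (hT : 0 < T)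
    (n : ℕ) :
    |1 / T * (∫ t in Ioc 0 T, f (pos t ω)) -
        (∑ i ∈ Finset.range n, f (ω.1 i) * (ω.2 i).toReal) / T| ≤
      B * |(∑ i ∈ Finset.range n, (ω.2 i).toReal) / T - 1| :=
  calc |1 / T * (∫ t in Ioc 0 T, f (pos t ω)) -
        (∑ i ∈ Finset.range n, f (ω.1 i) * (ω.2 i).toReal) / T|
      = |(∫ t in Ioc 0 T, f (pos t ω)) - ∑ i ∈ Finset.range n, f (ω.1 i) * (ω.2 i).toReal| / T := by
        rw [one_div_mul_eq_div, ← sub_div, abs_div, abs_of_pos hT]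
    _ ≤ B * |∑ i ∈ Finset.range n, (ω.2 i).toReal - T| / T := by
        gcongr
        exact abs_setIntegral_comp_pos_sub_sum_le hf hω hT.le n
    _ = B * |(∑ i ∈ Finset.range n, (ω.2 i).toReal) / T - 1| := by
        rw [mul_div_assoc, div_sub_one hT.ne', abs_div, abs_of_pos hT]

end Traj

end JumpPath

section Sojourn

variable {α : Type*} [MeasurableSpace α] {ρ : α → ℝ} {μ : Measure α}

/-- The measure `μ(dx) / ρ(x)`: for `μ` invariant under the skeleton chain, the unnormalized
invariant measure of the jump process with rates `ρ`. -/
def sojournMeasure (ρ : α → ℝ) (μ : Measure α) : Measure α :=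
  μ.withDensity fun x => (ENNReal.ofReal (ρ x))⁻¹

theorem sojournMeasure_univ : sojournMeasure ρ μ univ = ∫⁻ x, (ENNReal.ofReal (ρ x))⁻¹ ∂μ := by
  rw [sojournMeasure, withDensity_apply _ .univ, setLIntegral_univ]

theorem sojournMeasure_mono {μ' : Measure α} (h : μ ≤ μ') :
    sojournMeasure ρ μ ≤ sojournMeasure ρ μ' :=
  Measure.le_iff.2 fun s hs => by
    simpa only [sojournMeasure, withDensity_apply _ hs] using
      lintegral_mono' (Measure.restrict_mono_measure h s) le_rfl

theorem sojournMeasure_ne_zero (hρ : Measurable ρ) (hμ : μ ≠ 0) : sojournMeasure ρ μ ≠ 0 := by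
  rw [← Measure.measure_univ_ne_zero, sojournMeasure_univ, Ne, lintegral_eq_zero_iff (by fun_prop)]
  intro h
  refine hμ (ae_eq_bot.1 (eventually_false_iff_eq_bot.1 (h.mono fun x hx => ?_)))
  simp at hx

theorem lintegral_mul_snd_compProd_holdingKernel [SFinite μ] (hρ : Measurable ρ) {g : α → ℝ≥0∞}
    (hg : Measurable g) :
    ∫⁻ z, g z.1 * z.2 ∂(μ ⊗ₘ holdingKernel ρ hρ) = ∫⁻ x, g x * (ENNReal.ofReal (ρ x))⁻¹ ∂μ := by
  rw [Measure.lintegral_compProd (by fun_prop)]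
  refine lintegral_congr fun x => ?_
  simp only
  rw [lintegral_const_mul _ measurable_id', holdingKernel_apply, lintegral_id_expMeasE]

theorem lintegral_snd_compProd_holdingKernel [SFinite μ] (hρ : Measurable ρ) :
    ∫⁻ z, z.2 ∂(μ ⊗ₘ holdingKernel ρ hρ) = sojournMeasure ρ μ univ := by
  simpa [sojournMeasure_univ] using
    lintegral_mul_snd_compProd_holdingKernel (μ := μ) hρ (g := fun _ => 1) measurable_const

theorem map_fst_withDensity_snd_compProd_holdingKernel [SFinite μ] (hρ : Measurable ρ) :
    ((μ ⊗ₘ holdingKernel ρ hρ).withDensity Prod.snd).map Prod.fst = sojournMeasure ρ μ := by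
  ext s hs
  rw [Measure.map_apply measurable_fst hs, withDensity_apply _ (measurable_fst hs), sojournMeasure,
    withDensity_apply _ hs, ← lintegral_indicator (measurable_fst hs), ← lintegral_indicator hs]
  simp_rw [fun x : α => indicator_eq_indicator_one_mul s (fun x => (ENNReal.ofReal (ρ x))⁻¹) x,
    ← lintegral_mul_snd_compProd_holdingKernel hρ (measurable_one.indicator hs)]
  exact lintegral_congr fun z => indicator_eq_indicator_one_mul _ _ z

theorem ae_snd_ne_top_compProd_holdingKernel [SFinite μ] (hρ : Measurable ρ)
    (hμ : sojournMeasure ρ μ univ ≠ ∞) : ∀ᵐ z ∂(μ ⊗ₘ holdingKernel ρ hρ), z.2 < ∞ :=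
  ae_lt_top measurable_snd (by rwa [lintegral_snd_compProd_holdingKernel])

theorem integrable_mul_snd_compProd_holdingKernel [SFinite μ] (hρ : Measurable ρ)
    (hμ : sojournMeasure ρ μ univ ≠ ∞) {f : α → ℝ} (hf : Measurable f) {B : ℝ}
    (hfB : ∀ x, |f x| ≤ B) :
    Integrable (fun z => f z.1 * z.2.toReal) (μ ⊗ₘ holdingKernel ρ hρ) :=
  (integrable_toReal_of_lintegral_ne_top measurable_snd.aemeasurable
    (by rwa [lintegral_snd_compProd_holdingKernel])).bdd_mul
    (hf.comp measurable_fst).aestronglyMeasurable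
    (ae_of_all _ fun z => hfB z.1)

theorem integral_mul_snd_compProd_holdingKernel [SFinite μ] (hρ : Measurable ρ)
    (hμ : sojournMeasure ρ μ univ ≠ ∞) {f : α → ℝ} (hf : Measurable f) :
    ∫ z, f z.1 * z.2.toReal ∂(μ ⊗ₘ holdingKernel ρ hρ) = ∫ x, f x ∂sojournMeasure ρ μ := by
  rw [← map_fst_withDensity_snd_compProd_holdingKernel hρ,
    integral_map (by fun_prop) hf.aestronglyMeasurable,
    integral_withDensity_eq_integral_toReal_smul measurable_snd
      (ae_snd_ne_top_compProd_holdingKernel hρ hμ)]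
  simp only [smul_eq_mul, mul_comm]

end Sojourn

namespace IsChainLaw

variable {α : Type*} [MeasurableSpace α] {ρ : α → ℝ} {κ : Kernel α α} {x : α}
  {P : Measure (Traj α)}

theorem lintegral_holding_zero (hP : IsChainLaw ρ κ x P) (hρ : Measurable ρ) :
    ∫⁻ ω, ω.2 0 ∂P = (ENNReal.ofReal (ρ x))⁻¹ := by
  have h : ∫⁻ ω, ω.2 0 ∂P = ∫⁻ ω, (ENNReal.ofReal (ρ (ω.1 0)))⁻¹ ∂P := by
    simpa [lintegral_id_expMeasE] using
      hP.holding 1 (fun _ => 1) (fun _ s => s) measurable_const fun _ => measurable_id'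
  rw [h, ← lintegral_map (f := fun y => (ENNReal.ofReal (ρ y))⁻¹) (g := fun ω : Traj α => ω.1 0)
    (by fun_prop) (by fun_prop), hP.init, lintegral_dirac' _ (by fun_prop)]

theorem lintegral_enorm_mul_holding_zero_le {f : α → ℝ} {B δ : ℝ}
    (hP : IsChainLaw ρ κ x P) (hρ : Measurable ρ) (hx : δ ≤ ρ x) (hfB : ∀ y, |f y| ≤ B) :
    ∫⁻ ω, ‖f (ω.1 0) * (ω.2 0).toReal‖ₑ ∂P ≤ ENNReal.ofReal B * (ENNReal.ofReal δ)⁻¹ :=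
  calc ∫⁻ ω, ‖f (ω.1 0) * (ω.2 0).toReal‖ₑ ∂P
      ≤ ∫⁻ ω, ENNReal.ofReal B * ω.2 0 ∂P := by
        refine lintegral_mono fun ω => ?_
        rw [enorm_mul]
        gcongr
        · exact (ofReal_norm _).symm.trans_le (ofReal_le_ofReal (hfB _))
        · rw [Real.enorm_of_nonneg toReal_nonneg]
          exact ofReal_toReal_le
    _ = ENNReal.ofReal B * (ENNReal.ofReal (ρ x))⁻¹ := by
        rw [lintegral_const_mul' _ _ ofReal_ne_top, hP.lintegral_holding_zero hρ]
    _ ≤ ENNReal.ofReal B * (ENNReal.ofReal δ)⁻¹ := by gcongr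

theorem ae_holding_ne_top [IsMarkovKernel κ] {Λ : Measure α} [SFinite Λ]
    (hP : IsChainLaw ρ κ x P) (hρ : Measurable ρ) (hκ : ∀ y, κ y ≤ Λ)
    (hΛ : sojournMeasure ρ Λ univ ≠ ∞) (hx : 0 < ρ x) : ∀ᵐ ω ∂P, ∀ i, ω.2 i ≠ ∞ := by
  have := hP.prob
  have hmean : ∀ i, ∫⁻ ω, ω.2 i ∂P ≠ ∞
    | 0 => by simpa [hP.lintegral_holding_zero hρ] using hx
    | i + 1 => by
      refine ne_top_of_le_ne_top hΛ ?_
      rw [← lintegral_snd_compProd_holdingKernel hρ]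
      refine (hP.isMarkovChain hρ).lintegral_succ_le (fun z => ?_) measurable_snd i
      rw [markedKernel_apply]
      exact compProd_mono_left (hκ z.1)
  exact ae_all_iff.2 fun i => (ae_lt_top (by fun_prop) (hmean i)).mono fun _ h => h.ne

end IsChainLaw

section TimeAverage

variable {ι α : Type*} [MeasurableSpace α] {ρ : α → ℝ} {κ : Kernel α α} [IsMarkovKernel κ]
  {ν Λ π₀ : Measure α} [SFinite Λ] [IsProbabilityMeasure π₀] {f : α → ℝ} {B δ : ℝ}
  {x : ι → α} {P : ι → Measure (Traj α)}

theorem tendstoInProbUniformly_average_holding (hP : ∀ i, IsChainLaw ρ κ (x i) (P i))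
    (hρ : Measurable ρ) (hν : ∀ y, ν ≤ κ y) (hν₀ : ν ≠ 0) (hκ : ∀ y, κ y ≤ Λ)
    (hΛ : sojournMeasure ρ Λ univ ≠ ∞) (hπ₀ : Kernel.Invariant κ π₀) (hδ : 0 < δ)
    (hx : ∀ i, δ ≤ ρ (x i)) (hf : Measurable f) (hfB : ∀ y, |f y| ≤ B) :
    TendstoInProbUniformly P
      (fun (n : ℕ) ω => (∑ k ∈ Finset.range n, f (ω.1 k) * (ω.2 k).toReal) / n) atTop
      (∫ y, f y ∂sojournMeasure ρ π₀) := by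
  have := fun i => (hP i).prob
  obtain ⟨x₀⟩ := π₀.nonempty_of_neZero
  have : IsFiniteMeasure ν := isFiniteMeasure_of_le (κ x₀) (hν x₀)
  have hπ₀_sojourn : sojournMeasure ρ π₀ univ ≠ ∞ :=
    ne_top_of_le_ne_top hΛ (sojournMeasure_mono (invariant_le_of_forall_le hκ hπ₀) univ)
  have hmin : ∀ z, ν ⊗ₘ holdingKernel ρ hρ ≤ markedKernel κ (holdingKernel ρ hρ) z := fun z => by
    rw [markedKernel_apply]
    exact compProd_mono_left (hν z.1)
  have hmin₀ : ν ⊗ₘ holdingKernel ρ hρ ≠ 0 := by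
    rwa [← Measure.measure_univ_ne_zero, Measure.compProd_apply_univ, Measure.measure_univ_ne_zero]
  have hmaj : ∀ z, markedKernel κ (holdingKernel ρ hρ) z ≤ Λ ⊗ₘ holdingKernel ρ hρ := fun z => by
    rw [markedKernel_apply]
    exact compProd_mono_left (hκ z.1)
  have hlln := tendstoInProbUniformly_average (F := fun z => f z.1 * z.2.toReal)
    (fun i => (hP i).isMarkovChain hρ) hmin hmin₀ hmaj (invariant_markedKernel hπ₀) (by fun_prop)
    (integrable_mul_snd_compProd_holdingKernel hρ hΛ hf hfB)
    (mul_ne_top ofReal_ne_top (inv_ne_top.2 (ofReal_pos.2 hδ).ne'))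
    fun i => (hP i).lintegral_enorm_mul_holding_zero_le hρ (hx i) hfB
  rwa [integral_mul_snd_compProd_holdingKernel hρ hπ₀_sojourn hf] at hlln

theorem tendstoInProbUniformly_timeAverage (hP : ∀ i, IsChainLaw ρ κ (x i) (P i))
    (hρ : Measurable ρ) (hν : ∀ y, ν ≤ κ y) (hν₀ : ν ≠ 0) (hκ : ∀ y, κ y ≤ Λ)
    (hΛ : sojournMeasure ρ Λ univ ≠ ∞) (hπ₀ : Kernel.Invariant κ π₀) (hδ : 0 < δ)
    (hx : ∀ i, δ ≤ ρ (x i)) (hf : Measurable f) (hfB : ∀ y, |f y| ≤ B) :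
    TendstoInProbUniformly P (fun T ω => 1 / T * ∫ t in Ioc 0 T, f (Traj.pos t ω)) atTop
      (⨍ y, f y ∂sojournMeasure ρ π₀) := by
  -- The number of jumps up to time `T` is close to `T / a`, where `a` is the mean sojourn time.
  set a := (sojournMeasure ρ π₀).real univ with ha_def
  have ha : 0 < a := toReal_pos
    (Measure.measure_univ_ne_zero.2 (sojournMeasure_ne_zero hρ (NeZero.ne π₀)))
    (ne_top_of_le_ne_top hΛ (sojournMeasure_mono (invariant_le_of_forall_le hκ hπ₀) univ))
  have hn : Tendsto (fun T : ℝ => ⌊a⁻¹ * T⌋₊) atTop atTop :=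
    tendsto_nat_floor_atTop.comp (tendsto_id.const_mul_atTop (inv_pos.2 ha))
  have hnT : Tendsto (fun T : ℝ => (⌊a⁻¹ * T⌋₊ : ℝ) / T) atTop (𝓝 a⁻¹) :=
    tendsto_nat_floor_mul_div_atTop (inv_nonneg.2 ha.le)
  have hreward := ((tendstoInProbUniformly_average_holding hP hρ hν hν₀ hκ hΛ hπ₀ hδ hx hf
    hfB).comp hn).mul_of_tendsto hnT
  have htime := ((tendstoInProbUniformly_average_holding hP hρ hν hν₀ hκ hΛ hπ₀ hδ hx
    (f := fun _ => 1) measurable_const fun _ => abs_one.le).comp hn).mul_of_tendsto hnT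
  simp only [one_mul, integral_const, smul_eq_mul, mul_one, ← ha_def, inv_mul_cancel₀ ha.ne']
    at htime
  rw [average_eq, smul_eq_mul, ← ha_def]
  refine hreward.of_abs_sub_le htime B ?_
  filter_upwards [eventually_gt_atTop 0, hn.eventually_ne_atTop 0] with T hT hnT₀ i
  filter_upwards [(hP i).ae_holding_ne_top hρ hκ hΛ (hδ.trans_le (hx i))] with ω hω
  have hcancel : ∀ s : ℝ, (⌊a⁻¹ * T⌋₊ : ℝ) / T * (s / ⌊a⁻¹ * T⌋₊) = s / T := fun s => by
    rw [mul_comm, div_mul_div_cancel₀ (Nat.cast_ne_zero.2 hnT₀)]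
  simp only [hcancel]
  exact Traj.abs_average_sub_div_sum_le hfB hω hT _

theorem empirical_measure_lln_general {P : α → Measure (Traj α)} {K : Set α}
    (hP : ∀ x ∈ K, IsChainLaw ρ κ x (P x)) (hρ : Measurable ρ) (hν : ∀ y, ν ≤ κ y) (hν₀ : ν ≠ 0)
    (hκ : ∀ y, κ y ≤ Λ) (hΛ : sojournMeasure ρ Λ univ ≠ ∞) (hπ₀ : Kernel.Invariant κ π₀)
    (hδ : 0 < δ) (hK : ∀ x ∈ K, δ ≤ ρ x) (hf : Measurable f) (hfB : ∀ y, |f y| ≤ B)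
    {ε : ℝ} (hε : 0 < ε) :
    Tendsto (fun T : ℝ => ⨆ x ∈ K, P x {ω | ε <
        |1 / T * (∫ t in Ioc 0 T, f (Traj.pos t ω)) - ⨍ y, f y ∂sojournMeasure ρ π₀|})
      atTop (𝓝 0) := by
  simp only [← iSup_subtype'']
  exact tendstoInProbUniformly_timeAverage (fun x : K => hP x x.2) hρ hν hν₀ hκ hΛ hπ₀ hδ
    (fun x => hK x x.2) hf hfB ε hε

end TimeAverage

namespace ChainSetting

variable {X : Type*} [MeasurableSpace X] [TopologicalSpace X]

theorem piMeas_eq_smul_sojournMeasure (S : ChainSetting X) (π₀ : Measure X) :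
    S.piMeas π₀ = (sojournMeasure S.r π₀ univ)⁻¹ • sojournMeasure S.r π₀ := by
  rw [sojournMeasure_univ, sojournMeasure, piMeas]

theorem exists_pos_forall_le_r (S : ChainSetting X) {K : Set X} (hK : IsCompact K)
    (hKE : K ⊆ S.E0ᶜ) : ∃ δ > 0, ∀ x ∈ K, δ ≤ S.r x :=
  hK.exists_forall_le' S.r_cont.continuousOn fun x hx => (S.r_nonneg x).lt_of_ne' (hKE hx)

theorem exists_smul_lam_le_skel [CompactSpace X] (S : ChainSetting X) :
    ∃ c : ℝ≥0∞, c ≠ 0 ∧ ∀ x, c • S.lam ≤ S.skel x := by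
  obtain ⟨c, hc, hcp⟩ := isCompact_univ.exists_forall_le' S.p_cont.continuousOn
    fun z _ => S.p_pos z.1 z.2
  refine ⟨ENNReal.ofReal c, (ofReal_pos.2 hc).ne', fun x => ?_⟩
  rw [← withDensity_const]
  exact withDensity_mono (ae_of_all _ fun y => ofReal_le_ofReal (hcp (x, y) (mem_univ _)))

theorem exists_skel_le_smul_lam [CompactSpace X] (S : ChainSetting X) :
    ∃ C : ℝ≥0∞, C ≠ ∞ ∧ ∀ x, S.skel x ≤ C • S.lam := by
  obtain ⟨C, hC⟩ := isCompact_univ.bddAbove_image S.p_cont.continuousOn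
  refine ⟨ENNReal.ofReal C, ofReal_ne_top, fun x => ?_⟩
  rw [← withDensity_const]
  exact withDensity_mono (ae_of_all _ fun y =>
    ofReal_le_ofReal (hC (mem_image_of_mem _ (mem_univ (x, y)))))

/-- The skeleton transition probabilities `S.skel`, bundled as a kernel. -/
def skelKernel [SecondCountableTopology X] [OpensMeasurableSpace X] (S : ChainSetting X) :
    Kernel X X where
  toFun := S.skel
  measurable' := by
    have := S.lam_prob
    refine Measure.measurable_of_measurable_coe _ fun s hs => ?_
    simp_rw [skel, withDensity_apply _ hs]
    exact S.p_cont.measurable.ennreal_ofReal.lintegral_prod_right'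

instance [SecondCountableTopology X] [OpensMeasurableSpace X] (S : ChainSetting X) :
    IsMarkovKernel S.skelKernel where
  isProbabilityMeasure x := ⟨by
    have hint : Integrable (S.p x) S.lam := .of_integral_ne_zero (by simp [S.p_int x])
    change S.skel x univ = 1
    rw [skel, withDensity_apply _ .univ, setLIntegral_univ,
      ← ofReal_integral_eq_lintegral_ofReal hint (ae_of_all _ fun y => (S.p_pos x y).le),
      S.p_int x, ofReal_one]⟩

theorem invariant_skelKernel [SecondCountableTopology X] [OpensMeasurableSpace X]
    (S : ChainSetting X) {π₀ : Measure X}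
    (hπ₀ : ∀ s, MeasurableSet s → ∫⁻ x, S.skel x s ∂π₀ = π₀ s) :
    Kernel.Invariant S.skelKernel π₀ :=
  Measure.ext fun s hs => (Measure.bind_apply hs S.skelKernel.aemeasurable).trans (hπ₀ s hs)

theorem sojournMeasure_smul_lam_univ_ne_top (S : ChainSetting X) {C : ℝ≥0∞} (hC : C ≠ ∞) :
    sojournMeasure S.r (C • S.lam) univ ≠ ∞ := by
  rw [sojournMeasure_univ, lintegral_smul_measure]
  exact mul_ne_top hC S.inv_r_int

end ChainSetting

/-- **Theorem 2.2** (law of large numbers for the empirical measure). For every `f ∈ C(E)`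
and every `x ∈ E \ E₀`, the time average `(1/T)∫₀^T f(X_t) dt` converges in `P_x`-probability
to `π(f)` as `T → ∞`; moreover the convergence is uniform over `x` in any compact subset of
`E \ E₀`. -/
theorem empirical_measure_lln (S : ChainSetting E)
    (P : E → Measure (Traj E)) (hP : ∀ x, IsChainLaw S.r S.skel x (P x))
    (π₀ : Measure E) (hπ₀ : IsProbabilityMeasure π₀)
    (hπ₀inv : ∀ s : Set E, MeasurableSet s → ∫⁻ x, S.skel x s ∂π₀ = π₀ s)
    (f : C(E, ℝ)) :
    (∀ x, x ∉ S.E0 → ∀ ε > (0 : ℝ),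
      Tendsto (fun T : ℝ =>
          P x {ω : Traj E | ε <
            |(1 / T) * (∫ t in Set.Ioc (0 : ℝ) T, f (Traj.pos t ω)) - ∫ y, f y ∂S.piMeas π₀|})
        atTop (𝓝 (0 : ℝ≥0∞))) ∧
    (∀ K : Set E, IsCompact K → K ⊆ S.E0ᶜ → ∀ ε > (0 : ℝ),
      Tendsto (fun T : ℝ =>
          ⨆ x ∈ K, P x {ω : Traj E | ε <
            |(1 / T) * (∫ t in Set.Ioc (0 : ℝ) T, f (Traj.pos t ω)) - ∫ y, f y ∂S.piMeas π₀|})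
        atTop (𝓝 (0 : ℝ≥0∞))) := by
  have := S.lam_prob
  obtain ⟨c, hc, hmin⟩ := S.exists_smul_lam_le_skel
  obtain ⟨C, hC, hmaj⟩ := S.exists_skel_le_smul_lam
  have hcompact : ∀ K : Set E, IsCompact K → K ⊆ S.E0ᶜ → ∀ ε > (0 : ℝ),
      Tendsto (fun T : ℝ => ⨆ x ∈ K, P x {ω | ε <
        |(1 / T) * (∫ t in Ioc 0 T, f (Traj.pos t ω)) - ∫ y, f y ∂S.piMeas π₀|}) atTop (𝓝 0) := by
    intro K hK hKE ε hε
    obtain ⟨δ, hδ, hδr⟩ := S.exists_pos_forall_le_r hK hKE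
    rw [S.piMeas_eq_smul_sojournMeasure]
    exact empirical_measure_lln_general (κ := S.skelKernel) (fun x _ => hP x) S.r_cont.measurable
      hmin (Measure.measure_univ_ne_zero.1 (by simpa using hc)) hmaj
      (S.sojournMeasure_smul_lam_univ_ne_top hC)
      (S.invariant_skelKernel hπ₀inv) hδ hδr f.continuous.measurable f.norm_coe_le_norm hε
  exact ⟨fun x hx => by simpa using hcompact {x} isCompact_singleton (by simpa using hx), hcompact⟩

end
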